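/- arXiv:0802.4101 — 2 statements merged into one kernel-verified Lean document; each statement's English description precedes it below -/
import Mathlib

section
/- Let 0 ≤ d < c ≤ 1/2. Let Z be a {0,1}-valued random variable with min{Pr[Z = 0], Pr[Z = 1]} ≥ c, and let Z' be a {0,1}-valued random variable jointly distributed with Z such that Pr[Z ≠ Z'] ≤ d. Then I(Z : Z') ≥ S(c) − S(d). -/
/-!
Let `E` be the indicator of the event `Z ≠ Z'`. The pair `(Z, Z')` is a relabelling of `(E, Z')`, so
subadditivity of entropy gives `S(Z, Z') ≤ S(E) + S(Z')` (`joint_le`, which rests on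
`log x ≤ x - 1`, applied cell by cell in `cell_le`). Hence `I(Z : Z') ≥ S(Z) - S(E)`. As the binary
entropy is increasing on `[0, 1/2]` and symmetric about `1/2`, the balance of `Z` gives
`S(Z) ≥ S(c)`, and `Pr[E = 1] ≤ d ≤ 1/2` gives `S(E) ≤ S(d)`.

The argument runs in natural logarithms, on Mathlib's `Real.negMulLog` and `Real.binEntropy`; the
two definitions of entropy at hand are these divided by `log 2`.
-/

/-- Shannon entropy (base 2) of a finitely supported probability mass function. -/
noncomputable def shEnt {α : Type*} [Fintype α] (p : α → ℝ) : ℝ :=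
  ∑ a, -(p a * Real.logb 2 (p a))

/-- Mutual information `I(X : Y) = S(X) + S(Y) − S(X,Y)` of a joint probability
mass function on a product of finite sets. -/
noncomputable def mutInf {α β : Type*} [Fintype α] [Fintype β] (p : α × β → ℝ) : ℝ :=
  shEnt (fun a => ∑ b, p (a, b)) + shEnt (fun b => ∑ a, p (a, b)) - shEnt p

/-- The binary entropy function (base-2 logarithms). -/
noncomputable def binEnt (p : ℝ) : ℝ :=
  -(p * Real.logb 2 p) - (1 - p) * Real.logb 2 (1 - p)

open Real

theorem shEnt_eq {α : Type*} [Fintype α] (p : α → ℝ) :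
    shEnt p = (∑ a, negMulLog (p a)) / log 2 := by
  simp only [shEnt, negMulLog, logb, Finset.sum_div]
  exact Finset.sum_congr rfl fun a _ => by ring

theorem binEnt_eq (p : ℝ) : binEnt p = binEntropy p / log 2 := by
  rw [binEnt, binEntropy_eq_negMulLog_add_negMulLog_one_sub, negMulLog, negMulLog, logb, logb]
  ring

/-- The contribution to subadditivity of one cell of mass `a`, lying in a row of mass `x` and a
column of mass `y`. -/
theorem cell_le {a x y : ℝ} (ha : 0 ≤ a) (hx : a ≤ x) (hy : a ≤ y) :
    negMulLog a + a * log x + a * log y ≤ x * y - a := by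
  rcases ha.eq_or_lt with rfl | ha
  · simpa using mul_nonneg hx hy
  have hx0 : 0 < x := ha.trans_le hx
  have hy0 : 0 < y := ha.trans_le hy
  have h := mul_le_mul_of_nonneg_left
    (log_le_sub_one_of_pos (div_pos (mul_pos hx0 hy0) ha)) ha.le
  rw [log_div (mul_pos hx0 hy0).ne' ha.ne', log_mul hx0.ne' hy0.ne'] at h
  have h2 : a * (x * y / a - 1) = x * y - a := by field_simp
  rw [negMulLog]
  linarith

/-- `S(Z, Z') ≤ S(Z') + S(E)`, where `p, q, r, s` are the masses of `(Z, Z') = (0, 0)`, `(0, 1)`,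
`(1, 0)`, `(1, 1)`, so that `Z'` has masses `p + r`, `q + s` and `E` has masses `p + s`, `q + r`. -/
theorem joint_le {p q r s : ℝ} (hp : 0 ≤ p) (hq : 0 ≤ q) (hr : 0 ≤ r) (hs : 0 ≤ s)
    (h1 : p + q + r + s = 1) :
    negMulLog p + negMulLog q + negMulLog r + negMulLog s ≤
      (negMulLog (p + r) + negMulLog (q + s)) + (negMulLog (p + s) + negMulLog (q + r)) := by
  have e1 := cell_le hp (x := p + r) (y := p + s) (by linarith) (by linarith)
  have e2 := cell_le hq (x := q + s) (y := q + r) (by linarith) (by linarith)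
  have e3 := cell_le hr (x := p + r) (y := q + r) (by linarith) (by linarith)
  have e4 := cell_le hs (x := q + s) (y := p + s) (by linarith) (by linarith)
  -- The product of the two marginals has total mass one.
  have h2 : (p + r) * (p + s) + (q + s) * (q + r) + (p + r) * (q + r) + (q + s) * (p + s) = 1 := by
    linear_combination (p + q + r + s + 1) * h1
  simp only [negMulLog] at *
  linarith

theorem binEntropy_mono {x y : ℝ} (hx : 0 ≤ x) (hxy : x ≤ y) (hy : y ≤ 1 / 2) :
    binEntropy x ≤ binEntropy y :=
  binEntropy_strictMonoOn.monotoneOn ⟨hx, by linarith⟩ ⟨by linarith, by linarith⟩ hxy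

theorem binEntropy_le_of_mem {c x : ℝ} (hc : 0 ≤ c) (h1 : c ≤ x) (h2 : c ≤ 1 - x) :
    binEntropy c ≤ binEntropy x := by
  rcases le_total x (1 / 2) with h | h
  · exact binEntropy_mono hc h1 h
  · rw [← binEntropy_one_sub x]
    exact binEntropy_mono hc h2 (by linarith)

/-- Let `0 ≤ d < c ≤ 1/2`. If `Z, Z'` are jointly distributed boolean random
variables (with joint pmf `μ`) such that `min{Pr[Z=0], Pr[Z=1]} ≥ c` and
`Pr[Z ≠ Z'] ≤ d`, then `I(Z : Z') ≥ S(c) − S(d)`. -/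
theorem mutInf_ge_of_predicts (c d : ℝ) (hd0 : 0 ≤ d) (hdc : d < c) (hc : c ≤ 1 / 2)
    (μ : Bool × Bool → ℝ) (hμ0 : ∀ z, 0 ≤ μ z) (hμ1 : ∑ z, μ z = 1)
    (hbal : min (∑ b, μ (false, b)) (∑ b, μ (true, b)) ≥ c)
    (herr : (∑ z : Bool × Bool, if z.1 = z.2 then 0 else μ z) ≤ d) :
    mutInf μ ≥ binEnt c - binEnt d := by
  obtain ⟨hb0, hb1⟩ := le_min_iff.mp hbal
  simp [Fintype.sum_prod_type] at hμ1 hb0 hb1 herr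
  have hp := hμ0 (false, false)
  have hq := hμ0 (false, true)
  have hr := hμ0 (true, false)
  have hs := hμ0 (true, true)
  rw [mutInf, shEnt_eq, shEnt_eq, shEnt_eq, binEnt_eq, binEnt_eq, ← add_div, ← sub_div, ← sub_div]
  refine div_le_div_of_nonneg_right ?_ (log_nonneg one_le_two)
  simp only [Fintype.sum_prod_type, Fintype.sum_bool]
  generalize μ (false, false) = p at *
  generalize μ (false, true) = q at *
  generalize μ (true, false) = r at *
  generalize μ (true, true) = s at *
  have hJ := joint_le hp hq hr hs (by linarith)
  have hZ : binEntropy c ≤ binEntropy (q + p) :=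
    binEntropy_le_of_mem (by linarith) (by linarith) (by linarith)
  have hE : binEntropy (q + r) ≤ binEntropy d :=
    binEntropy_mono (by linarith) (by linarith) (by linarith)
  rw [binEntropy_eq_negMulLog_add_negMulLog_one_sub (q + p),
    show 1 - (q + p) = s + r by linarith] at hZ
  rw [binEntropy_eq_negMulLog_add_negMulLog_one_sub (q + r),
    show 1 - (q + r) = p + s by linarith] at hE
  rw [add_comm p r, add_comm q s] at hJ
  linarith
end

section
/- There is a universal constant κ > 0 such that the following holds. Let 𝒳 and 𝒴 be finite nonempty sets, let f : 𝒳 × 𝒴 → {0,1} be a boolean function with VC(f) ≥ 1, let ε ∈ (0, 1/2), and let μ be any probability distribution (possibly non-product) on 𝒳 × 𝒴. Let the pair (X, Y) be distributed according to μ. Then there exist a positive integer N, a function a : 𝒳 → {1,…,N}, and a function b : {1,…,N} × 𝒴 → {0,1}, such that Pr_{(x,y)←μ}[ b(a(x), y) ≠ f(x, y) ] ≤ ε and log₂ N ≤ κ · (1/ε) · log₂(1/ε) · ((1/ε)·I(X : Y) + 1) · VC(f). In other words, the one-way distributional communication complexity D^{1,μ}_ε(f) is at most κ · (1/ε)·log₂(1/ε)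 · ((1/ε)·I(X:Y) + 1) · VC(f). -/
/-- The family `{f_x : x ∈ 𝒳}` shatters the set `S ⊆ 𝒴`. -/
def Shatters {𝒳 𝒴 : Type*} (f : 𝒳 → 𝒴 → Bool) (S : Finset 𝒴) : Prop :=
  ∀ R ⊆ S, ∃ x : 𝒳, ∀ s ∈ S, (s ∈ R ↔ f x s = true)

/-! ### Change of measure via Donsker–Varadhan -/

/-- Donsker–Varadhan inequality for the joint distribution `μ` against the product of its
marginals, in the linearised form given by `log t ≤ t - 1`. -/
lemma sum_mul_log_le {α β : Type*} [Fintype α] [Fintype β] (μ : α × β → ℝ)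
    (hμ : ∀ z, 0 ≤ μ z) (hsum : ∑ z, μ z = 1) (h : α × β → ℝ) (hpos : ∀ z, 0 < h z) :
    ∑ z, μ z * Real.log (h z) ≤ mutInf μ * Real.log 2 +
      ∑ z : α × β, (∑ b, μ (z.1, b)) * (∑ a, μ (a, z.2)) * h z - 1 := by
  have hl2 : Real.log 2 ≠ 0 := (Real.log_pos (by norm_num)).ne'
  have hI : mutInf μ * Real.log 2 = ∑ z : α × β, μ z *
      (Real.log (μ z) - Real.log (∑ b, μ (z.1, b)) - Real.log (∑ a, μ (a, z.2))) := by
    have h1 : shEnt (fun a => ∑ b, μ (a, b)) * Real.log 2 =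
        ∑ z : α × β, -(μ z * Real.log (∑ b, μ (z.1, b))) := by
      rw [Fintype.sum_prod_type]
      simp only [shEnt, Finset.sum_mul]
      refine Finset.sum_congr rfl fun a _ => ?_
      simp only [Finset.sum_neg_distrib, ← Finset.sum_mul, Real.logb]
      field_simp
    have h2 : shEnt (fun b => ∑ a, μ (a, b)) * Real.log 2 =
        ∑ z : α × β, -(μ z * Real.log (∑ a, μ (a, z.2))) := by
      rw [Fintype.sum_prod_type_right]
      simp only [shEnt, Finset.sum_mul]
      refine Finset.sum_congr rfl fun a _ => ?_
      simp only [Finset.sum_neg_distrib, ← Finset.sum_mul, Real.logb]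
      field_simp
    have h3 : shEnt μ * Real.log 2 = ∑ z : α × β, -(μ z * Real.log (μ z)) := by
      simp only [shEnt, Finset.sum_mul]
      refine Finset.sum_congr rfl fun a _ => ?_
      simp only [Real.logb]
      field_simp
    rw [mutInf, sub_mul, add_mul, h1, h2, h3, ← Finset.sum_add_distrib, ← Finset.sum_sub_distrib]
    refine Finset.sum_congr rfl fun a _ => ?_
    ring
  rw [hI, ← hsum, ← Finset.sum_add_distrib, ← Finset.sum_sub_distrib]
  refine Finset.sum_le_sum fun z _ => ?_
  have hX0 : 0 ≤ ∑ b, μ (z.1, b) := Finset.sum_nonneg fun _ _ => hμ _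
  have hY0 : 0 ≤ ∑ a, μ (a, z.2) := Finset.sum_nonneg fun _ _ => hμ _
  rcases (hμ z).eq_or_lt with h0 | h0
  · rw [← h0]
    have := mul_nonneg (mul_nonneg hX0 hY0) (hpos z).le
    simpa using this
  · have hX : 0 < ∑ b, μ (z.1, b) :=
      h0.trans_le (Finset.single_le_sum (f := fun b => μ (z.1, b)) (fun _ _ => hμ _)
        (Finset.mem_univ z.2))
    have hY : 0 < ∑ a, μ (a, z.2) :=
      h0.trans_le (Finset.single_le_sum (f := fun a => μ (a, z.2)) (fun _ _ => hμ _)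
        (Finset.mem_univ z.1))
    generalize ∑ b, μ (z.1, b) = p at *
    generalize ∑ a, μ (a, z.2) = q at *
    have hh := hpos z
    have key := Real.log_le_sub_one_of_pos (x := p * q * h z / μ z) (by positivity)
    rw [Real.log_div (by positivity) h0.ne', Real.log_mul (by positivity) hh.ne',
      Real.log_mul hX.ne' hY.ne'] at key
    have k2 := mul_le_mul_of_nonneg_left key h0.le
    have k3 : μ z * (p * q * h z / μ z - 1) = p * q * h z - μ z := by
      field_simp
    rw [k3] at k2
    linarith

lemma sum_marginals_mul {α β : Type*} [Fintype α] [Fintype β] (μ : α × β → ℝ)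
    (hsum : ∑ z, μ z = 1) :
    ∑ z : α × β, (∑ b, μ (z.1, b)) * (∑ a, μ (a, z.2)) = 1 := by
  rw [Fintype.sum_prod_type]
  simp only [← Finset.mul_sum, ← Finset.sum_mul]
  rw [← Fintype.sum_prod_type, ← Fintype.sum_prod_type_right, hsum, one_mul]

lemma mutInf_nonneg {α β : Type*} [Fintype α] [Fintype β] (μ : α × β → ℝ)
    (hμ : ∀ z, 0 ≤ μ z) (hsum : ∑ z, μ z = 1) : 0 ≤ mutInf μ := by
  have h := sum_mul_log_le μ hμ hsum (fun _ => 1) (fun _ => one_pos)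
  simp only [Real.log_one, mul_zero, Finset.sum_const_zero, mul_one,
    sum_marginals_mul μ hsum] at h
  have : 0 < Real.log 2 := Real.log_pos (by norm_num)
  exact nonneg_of_mul_nonneg_left (by linarith) this

/-- An event that is exponentially unlikely under the product of the marginals is unlikely under
the joint distribution, provided the mutual information is small. -/
lemma prob_mul_le_mutInf_add_one {α β : Type*} [Fintype α] [Fintype β] (μ : α × β → ℝ)
    (hμ : ∀ z, 0 ≤ μ z) (hsum : ∑ z, μ z = 1) (P : α × β → Prop) [DecidablePred P] (k : ℕ)
    (hP : ∑ z : α × β, (if P z then 0 else (∑ b, μ (z.1, b)) * (∑ a, μ (a, z.2)))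
      ≤ (1 / 2 : ℝ) ^ k) :
    (∑ z, if P z then 0 else μ z) * k ≤ mutInf μ + 1 := by
  have hl2 : 0 < Real.log 2 := Real.log_pos (by norm_num)
  -- The tilt `2ᵏ` on the event contributes at most `1` to the exponential moment, as does its
  -- complement; the factor `1 / 2` normalises the total.
  have h := sum_mul_log_le μ hμ hsum (fun z => (if P z then 1 else 2 ^ k) / 2)
    (fun z => by split_ifs <;> positivity)
  have h1 : ∑ z, μ z * Real.log ((if P z then 1 else 2 ^ k) / 2) =
      (∑ z, if P z then 0 else μ z) * k * Real.log 2 - Real.log 2 := by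
    have e : Real.log 2 = ∑ z, μ z * Real.log 2 := by rw [← Finset.sum_mul, hsum, one_mul]
    nth_rewrite 2 [e]
    rw [Finset.sum_mul, Finset.sum_mul, ← Finset.sum_sub_distrib]
    refine Finset.sum_congr rfl fun z _ => ?_
    split_ifs
    · simp
    · rw [Real.log_div (by positivity) (by norm_num), Real.log_pow]
      ring
  have h2 : ∑ z : α × β, (∑ b, μ (z.1, b)) * (∑ a, μ (a, z.2)) *
      ((if P z then 1 else 2 ^ k) / 2) ≤ 1 := by
    calc _ ≤ ∑ z : α × β, ((∑ b, μ (z.1, b)) * (∑ a, μ (a, z.2)) / 2 + 2 ^ k / 2 *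
          (if P z then 0 else (∑ b, μ (z.1, b)) * (∑ a, μ (a, z.2)))) := by
          refine Finset.sum_le_sum fun z _ => ?_
          have hX0 : 0 ≤ ∑ b, μ (z.1, b) := Finset.sum_nonneg fun _ _ => hμ _
          have hY0 : 0 ≤ ∑ a, μ (a, z.2) := Finset.sum_nonneg fun _ _ => hμ _
          have := mul_nonneg hX0 hY0
          split_ifs <;> linarith
      _ ≤ 1 / 2 + 2 ^ k / 2 * (1 / 2 : ℝ) ^ k := by
          rw [Finset.sum_add_distrib, ← Finset.sum_div, sum_marginals_mul μ hsum,
            ← Finset.mul_sum]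
          gcongr
      _ = 1 := by
          rw [div_mul_eq_mul_div, ← mul_pow]
          norm_num
  rw [h1] at h
  refine le_of_mul_le_mul_right ?_ hl2
  linarith

/-! ### Packing bound for classes of bounded VC-dimension -/

/-- For a `p`-separated set `S`, some `m` points of `𝒴` leave at most `(1 - p) ^ m * |S| ^ 2`
ordered pairs untold apart: choosing each new point at least as well as a `w`-random one
multiplies the number of remaining pairs by at most `1 - p`. -/
lemma exists_separating {𝒳 𝒴 : Type*} [Fintype 𝒴] [DecidableEq 𝒳] [DecidableEq 𝒴]
    (f : 𝒳 → 𝒴 → Bool) (w : 𝒴 → ℝ) (hw : ∀ y, 0 ≤ w y) (hw1 : ∑ y, w y = 1) (p : ℝ)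
    (hp1 : p ≤ 1) (S : Finset 𝒳)
    (hS : ∀ x ∈ S, ∀ x' ∈ S, x ≠ x' → p ≤ ∑ y, if f x y = f x' y then 0 else w y) (m : ℕ) :
    ∃ T : Finset 𝒴, T.card ≤ m ∧
      ((S.offDiag.filter fun q => ∀ y ∈ T, f q.1 y = f q.2 y).card : ℝ)
        ≤ (1 - p) ^ m * S.card ^ 2 := by
  induction m with
  | zero =>
    refine ⟨∅, by simp, ?_⟩
    simp only [Finset.notMem_empty, false_imp_iff, implies_true, Finset.filter_true, pow_zero,
      one_mul]
    have : S.offDiag.card ≤ S.card ^ 2 := by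
      rw [Finset.offDiag_card, sq]; exact Nat.sub_le _ _
    exact_mod_cast this
  | succ m ih =>
    obtain ⟨T, hT, hc⟩ := ih
    set Q := S.offDiag.filter fun q => ∀ y ∈ T, f q.1 y = f q.2 y with hQ
    have havg : ∑ y, w y * ((Q.filter fun q => f q.1 y = f q.2 y).card : ℝ)
        ≤ ∑ y, w y * ((1 - p) * Q.card) := by
      have e1 : ∀ y, w y * ((Q.filter fun q => f q.1 y = f q.2 y).card : ℝ) =
          ∑ q ∈ Q, if f q.1 y = f q.2 y then w y else 0 := by
        intro y
        rw [← Finset.sum_filter, Finset.sum_const, nsmul_eq_mul, mul_comm]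
      simp only [e1]
      rw [Finset.sum_comm, ← Finset.sum_mul, hw1, one_mul, mul_comm, ← nsmul_eq_mul,
        ← Finset.sum_const]
      refine Finset.sum_le_sum fun q hq => ?_
      have hq' := (Finset.mem_filter.1 hq).1
      rw [Finset.mem_offDiag] at hq'
      have hs := hS q.1 hq'.1 q.2 hq'.2.1 hq'.2.2
      have e2 : (∑ y, if f q.1 y = f q.2 y then w y else 0) +
          (∑ y, if f q.1 y = f q.2 y then 0 else w y) = 1 := by
        rw [← Finset.sum_add_distrib, ← hw1]
        refine Finset.sum_congr rfl fun y _ => ?_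
        split_ifs <;> simp
      linarith
    obtain ⟨y, hy⟩ : ∃ y, 0 < w y ∧
        ((Q.filter fun q => f q.1 y = f q.2 y).card : ℝ) ≤ (1 - p) * Q.card := by
      by_contra! hcon
      obtain ⟨y₀, hy₀⟩ : ∃ y, 0 < w y := by
        by_contra! h0
        have := Finset.sum_nonpos fun y (_ : y ∈ Finset.univ) => h0 y
        linarith
      refine absurd havg (not_le.2 (Finset.sum_lt_sum (fun y _ => ?_) ⟨y₀, Finset.mem_univ _, ?_⟩))
      · rcases (hw y).eq_or_lt with h0 | h0
        · simp [← h0]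
        · exact mul_le_mul_of_nonneg_left (hcon y h0).le (hw y)
      · exact mul_lt_mul_of_pos_left (hcon y₀ hy₀) hy₀
    refine ⟨insert y T, (Finset.card_insert_le _ _).trans (by omega), ?_⟩
    have e3 : (S.offDiag.filter fun q => ∀ y' ∈ insert y T, f q.1 y' = f q.2 y') =
        Q.filter fun q => f q.1 y = f q.2 y := by
      ext q
      simp only [hQ, Finset.mem_filter, Finset.forall_mem_insert]
      tauto
    rw [e3]
    calc _ ≤ (1 - p) * Q.card := hy.2
      _ ≤ (1 - p) * ((1 - p) ^ m * S.card ^ 2) :=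
        mul_le_mul_of_nonneg_left hc (by linarith)
      _ = _ := by ring

/-- Sauer–Shelah: if the points of `T` tell apart the elements of `S`, then `S` is no larger than
the number of subsets of `T` of size at most `d`. -/
lemma card_le_sum_choose {𝒳 𝒴 : Type*} [DecidableEq 𝒳] [DecidableEq 𝒴]
    (f : 𝒳 → 𝒴 → Bool) (d : ℕ) (hd : ∀ S : Finset 𝒴, Shatters f S → S.card ≤ d)
    (S : Finset 𝒳) (T : Finset 𝒴)
    (hST : ∀ x ∈ S, ∀ x' ∈ S, (∀ y ∈ T, f x y = f x' y) → x = x') :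
    S.card ≤ ∑ i ∈ Finset.range (d + 1), T.card.choose i := by
  set 𝒜 : Finset (Finset 𝒴) := S.image fun x => T.filter fun y => f x y = true with h𝒜
  have hinj : S.card = 𝒜.card := by
    rw [h𝒜, Finset.card_image_of_injOn]
    intro x hx x' hx' hxx'
    refine hST x hx x' hx' fun y hy => ?_
    have := Finset.ext_iff.1 hxx' y
    simp only [Finset.mem_filter, hy, true_and] at this
    exact Bool.eq_iff_iff.2 this
  have hsub : 𝒜.shatterer ⊆ (Finset.range (d + 1)).biUnion fun i => T.powersetCard i := by
    intro R hR
    rw [Finset.mem_shatterer] at hR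
    have hRT : R ⊆ T := by
      obtain ⟨u, hu, hRu⟩ := hR (Finset.Subset.refl R)
      obtain ⟨x, -, rfl⟩ := Finset.mem_image.1 hu
      intro y hy
      rw [← hRu] at hy
      exact (Finset.mem_filter.1 (Finset.mem_inter.1 hy).2).1
    have hsh : Shatters f R := by
      intro R' hR'
      obtain ⟨u, hu, hRu⟩ := hR hR'
      obtain ⟨x, -, rfl⟩ := Finset.mem_image.1 hu
      refine ⟨x, fun s hs => ?_⟩
      rw [← hRu]
      simp [hs, hRT hs]
    simp only [Finset.mem_biUnion, Finset.mem_range, Finset.mem_powersetCard]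
    exact ⟨R.card, Nat.lt_succ_of_le (hd R hsh), hRT, rfl⟩
  calc S.card = 𝒜.card := hinj
    _ ≤ 𝒜.shatterer.card := Finset.card_le_card_shatterer 𝒜
    _ ≤ _ := Finset.card_le_card hsub
    _ ≤ ∑ i ∈ Finset.range (d + 1), (T.powersetCard i).card := Finset.card_biUnion_le
    _ = _ := by simp only [Finset.card_powersetCard]

/-- The usual `(e m / d) ^ d` bound on the Sauer–Shelah sum, for `m = d * n`. -/
lemma sum_choose_le (d n : ℕ) (hn : 1 ≤ n) :
    (∑ i ∈ Finset.range (d + 1), ((d * n).choose i : ℝ)) ≤ (3 * n) ^ d := by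
  have hn0 : (0 : ℝ) < n := by exact_mod_cast hn
  have hn1 : (1 : ℝ) ≤ n := by exact_mod_cast hn
  have h1 : (∑ i ∈ Finset.range (d + 1), ((d * n).choose i : ℝ)) ≤
      n ^ d * ∑ i ∈ Finset.range (d * n + 1), (1 / n : ℝ) ^ i * ((d * n).choose i : ℝ) := by
    have hle : d + 1 ≤ d * n + 1 := by nlinarith
    calc _ ≤ ∑ i ∈ Finset.range (d + 1),
            (n : ℝ) ^ d * ((1 / n : ℝ) ^ i * ((d * n).choose i : ℝ)) := by
          refine Finset.sum_le_sum fun i hi => ?_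
          rw [← mul_assoc]
          refine le_mul_of_one_le_left (by positivity) ?_
          have hid : i ≤ d := Nat.lt_succ_iff.1 (Finset.mem_range.1 hi)
          rw [one_div, inv_pow, ← div_eq_mul_inv, one_le_div (by positivity)]
          exact pow_le_pow_right₀ hn1 hid
      _ ≤ ∑ i ∈ Finset.range (d * n + 1),
            (n : ℝ) ^ d * ((1 / n : ℝ) ^ i * ((d * n).choose i : ℝ)) :=
          Finset.sum_le_sum_of_subset_of_nonneg (Finset.range_subset_range.2 hle)
            fun i _ _ => by positivity
      _ = _ := by rw [Finset.mul_sum]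
  have h2 : ∑ i ∈ Finset.range (d * n + 1), (1 / n : ℝ) ^ i * ((d * n).choose i : ℝ) =
      (1 / n + 1 : ℝ) ^ (d * n) := by
    rw [add_pow]
    simp
  have h3 : (1 / n + 1 : ℝ) ^ (d * n) ≤ 3 ^ d := by
    rw [mul_comm, pow_mul]
    refine pow_le_pow_left₀ (by positivity) ?_ d
    calc (1 / n + 1 : ℝ) ^ n ≤ (Real.exp (1 / n)) ^ n :=
          pow_le_pow_left₀ (by positivity) (Real.add_one_le_exp _) n
      _ = Real.exp 1 := by
          rw [← Real.exp_nat_mul]; congr 1; field_simp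
      _ ≤ 3 := (Real.exp_one_lt_d9.trans (by norm_num)).le
  calc _ ≤ _ := h1
    _ ≤ (n : ℝ) ^ d * 3 ^ d := by rw [h2]; gcongr
    _ = _ := by rw [← mul_pow, mul_comm]

/-- Packing bound: in a class of VC-dimension at most `d`, a `2⁻ᵏ`-separated set has at most
`2 ^ (8 k d)` elements. -/
lemma card_le_of_separated {𝒳 𝒴 : Type*} [Fintype 𝒴] [DecidableEq 𝒳] [DecidableEq 𝒴]
    (f : 𝒳 → 𝒴 → Bool) (d : ℕ) (hd1 : 1 ≤ d) (hd : ∀ S : Finset 𝒴, Shatters f S → S.card ≤ d)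
    (w : 𝒴 → ℝ) (hw : ∀ y, 0 ≤ w y) (hw1 : ∑ y, w y = 1) (k : ℕ) (hk : 1 ≤ k) (S : Finset 𝒳)
    (hS : ∀ x ∈ S, ∀ x' ∈ S, x ≠ x' →
      (1 / 2 : ℝ) ^ k ≤ ∑ y, if f x y = f x' y then 0 else w y) :
    S.card ≤ 2 ^ (8 * k * d) := by
  by_contra! hcon
  obtain ⟨S', hS'S, hS'⟩ := Finset.exists_subset_card_eq hcon.le
  -- With `d * n` points the expected number of unseparated pairs, at most
  -- `4 ^ (8 k d) * exp (- 16 k d)`, is below one, while the Sauer–Shelah bound `(3 n) ^ d` is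
  -- below `2 ^ (8 k d)`.
  set n : ℕ := 16 * k * 2 ^ k with hn
  have hn1 : 1 ≤ n := Nat.one_le_iff_ne_zero.2 (by positivity)
  obtain ⟨T, hT, hQ⟩ := exists_separating f w hw hw1 ((1 / 2 : ℝ) ^ k)
    (pow_le_one₀ (by norm_num) (by norm_num)) S'
    (fun x hx x' hx' => hS x (hS'S hx) x' (hS'S hx')) (d * n)
  have hlt : (1 - (1 / 2 : ℝ) ^ k) ^ (d * n) * (S'.card : ℝ) ^ 2 < 1 := by
    have e1 : (1 - (1 / 2 : ℝ) ^ k) ^ (d * n) ≤ Real.exp (-1) ^ (16 * k * d) := by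
      calc (1 - (1 / 2 : ℝ) ^ k) ^ (d * n) ≤ Real.exp (-(1 / 2 : ℝ) ^ k) ^ (d * n) := by
            refine pow_le_pow_left₀ ?_ (Real.one_sub_le_exp_neg _) _
            exact sub_nonneg.2 (pow_le_one₀ (by norm_num) (by norm_num))
        _ = Real.exp (-1) ^ (16 * k * d) := by
            rw [← Real.exp_nat_mul, ← Real.exp_nat_mul]
            congr 1
            rw [hn]
            push_cast
            have : (1 / 2 : ℝ) ^ k * 2 ^ k = 1 := by rw [← mul_pow]; norm_num
            linear_combination (-(16 * k * d : ℝ)) * this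
    have e2 : (S'.card : ℝ) ^ 2 = 2 ^ (16 * k * d) := by
      rw [hS']
      push_cast
      rw [← pow_mul]
      congr 1
      ring
    have e3 : Real.exp (-1) * 2 < 1 := by
      rw [Real.exp_neg, inv_mul_lt_iff₀ (Real.exp_pos 1)]
      have := Real.exp_one_gt_d9
      linarith
    rw [e2]
    calc _ ≤ Real.exp (-1) ^ (16 * k * d) * 2 ^ (16 * k * d) := by gcongr
      _ = (Real.exp (-1) * 2) ^ (16 * k * d) := (mul_pow _ _ _).symm
      _ < 1 := pow_lt_one₀ (by positivity) e3 (by positivity)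
  have hempty : (S'.offDiag.filter fun q => ∀ y ∈ T, f q.1 y = f q.2 y) = ∅ := by
    have := hQ.trans_lt hlt
    rw [← Finset.card_eq_zero]
    exact Nat.lt_one_iff.1 (by exact_mod_cast this)
  have hle := card_le_sum_choose f d hd S' T (by
    intro x hx x' hx' hall
    by_contra hne
    have : (x, x') ∈ (S'.offDiag.filter fun q => ∀ y ∈ T, f q.1 y = f q.2 y) :=
      Finset.mem_filter.2 ⟨Finset.mem_offDiag.2 ⟨hx, hx', hne⟩, hall⟩
    rw [hempty] at this
    exact Finset.notMem_empty _ this)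
  have hle2 : S'.card ≤ (3 * n) ^ d := by
    have h1 : (∑ i ∈ Finset.range (d + 1), T.card.choose i) ≤
        ∑ i ∈ Finset.range (d + 1), (d * n).choose i :=
      Finset.sum_le_sum fun i _ => Nat.choose_le_choose i hT
    refine (hle.trans h1).trans ?_
    exact_mod_cast sum_choose_le d n hn1
  have h3n : 3 * n < 2 ^ (8 * k) := by
    have hk2 : k < 2 ^ k := Nat.lt_two_pow_self
    calc 3 * n = 48 * k * 2 ^ k := by rw [hn]; ring
      _ < 64 * 2 ^ k * 2 ^ k := by
        refine Nat.mul_lt_mul_of_pos_right ?_ (by positivity)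
        omega
      _ = 2 ^ (6 + k + k) := by rw [pow_add, pow_add]; norm_num
      _ ≤ 2 ^ (8 * k) := Nat.pow_le_pow_right (by norm_num) (by omega)
  have : (3 * n) ^ d < (2 ^ (8 * k)) ^ d := Nat.pow_lt_pow_left h3n (by omega)
  rw [← pow_mul, ← hS'] at this
  omega

/-! ### The protocol -/

/-- There is a universal constant `κ > 0` such that for every boolean function
`f : 𝒳 × 𝒴 → {0,1}` of VC-dimension `d ≥ 1`, every `ε ∈ (0,1/2)` and every
(possibly non-product) distribution `μ` on `𝒳 × 𝒴` with `(X,Y) ∼ μ`, there is a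
deterministic one-way protocol `(a, b)` with message set `{1,…,N}` having
distributional error at most `ε` under `μ` and communication
`log₂ N ≤ κ · (1/ε)·log₂(1/ε) · ((1/ε)·I(X:Y) + 1) · d`. -/
theorem distributional_one_way_vc_nonproduct :
    ∃ κ : ℝ, 0 < κ ∧
      ∀ (𝒳 𝒴 : Type) [Fintype 𝒳] [Fintype 𝒴] [Nonempty 𝒳] [Nonempty 𝒴]
        (f : 𝒳 → 𝒴 → Bool) (d : ℕ) (_ : 1 ≤ d)
        (_ : ∃ S : Finset 𝒴, S.card = d ∧ Shatters f S)
        (_ : ∀ S : Finset 𝒴, Shatters f S → S.card ≤ d)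
        (ε : ℝ) (_ : 0 < ε) (_ : ε < 1 / 2)
        (μ : 𝒳 × 𝒴 → ℝ) (_ : ∀ z, 0 ≤ μ z) (_ : ∑ z, μ z = 1),
        ∃ N : ℕ, 0 < N ∧
          ∃ (a : 𝒳 → Fin N) (b : Fin N → 𝒴 → Bool),
            (∑ z : 𝒳 × 𝒴, if b (a z.1) z.2 = f z.1 z.2 then 0 else μ z) ≤ ε ∧
            Real.logb 2 N ≤
              κ * (1 / ε) * Real.logb 2 (1 / ε) * ((1 / ε) * mutInf μ + 1) * d := by
  classical
  refine ⟨16, by norm_num, ?_⟩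
  intro 𝒳 𝒴 _ _ _ _ f d hd1 _ hd ε hε hε2 μ hμ hsum
  set I := mutInf μ with hI
  have hI0 : 0 ≤ I := mutInf_nonneg μ hμ hsum
  set k : ℕ := ⌈(I + 1) / ε⌉₊ with hkdef
  have hkge : (I + 1) / ε ≤ k := Nat.le_ceil _
  have hklt : (k : ℝ) < (I + 1) / ε + 1 := Nat.ceil_lt_add_one (by positivity)
  have hk : 1 ≤ k := Nat.one_le_ceil_iff.2 (by positivity)
  have hinv : 2 ≤ 1 / ε := by rw [le_div_iff₀ hε]; linarith
  set w : 𝒴 → ℝ := fun y => ∑ a, μ (a, y) with hwdef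
  have hw : ∀ y, 0 ≤ w y := fun y => Finset.sum_nonneg fun _ _ => hμ _
  have hw1 : ∑ y, w y = 1 := by rw [hwdef, ← Fintype.sum_prod_type_right, hsum]
  let dist : 𝒳 → 𝒳 → ℝ := fun x x' => ∑ y, if f x y = f x' y then 0 else w y
  have dist_comm : ∀ x x', dist x x' = dist x' x := fun x x' => by
    simp only [dist, eq_comm]
  -- A separated set of maximal cardinality.
  obtain ⟨S, hSmem, hSmax⟩ := Finset.exists_max_image
    (Finset.univ.filter fun S : Finset 𝒳 =>
      ∀ x ∈ S, ∀ x' ∈ S, x ≠ x' → (1 / 2 : ℝ) ^ k ≤ dist x x') Finset.card ⟨∅, by simp⟩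
  have hS := (Finset.mem_filter.1 hSmem).2
  have hcov : ∀ x, ∃ r : S, dist r x ≤ (1 / 2 : ℝ) ^ k := by
    intro x
    by_contra! hcon
    have hxS : x ∉ S := by
      intro hx
      have h := hcon ⟨x, hx⟩
      have h0 : dist x x = 0 := by simp [dist]
      have : (0 : ℝ) < (1 / 2) ^ k := by positivity
      simp only [h0] at h
      linarith
    have hins : insert x S ∈ Finset.univ.filter fun S : Finset 𝒳 =>
        ∀ x ∈ S, ∀ x' ∈ S, x ≠ x' → (1 / 2 : ℝ) ^ k ≤ dist x x' := by
      refine Finset.mem_filter.2 ⟨Finset.mem_univ _, fun u hu v hv huv => ?_⟩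
      rcases Finset.mem_insert.1 hu with hux | huS <;> rcases Finset.mem_insert.1 hv with hvx | hvS
      · exact absurd (hux.trans hvx.symm) huv
      · rw [hux, dist_comm]; exact (hcon ⟨v, hvS⟩).le
      · rw [hvx]; exact (hcon ⟨u, huS⟩).le
      · exact hS u huS v hvS huv
    have := hSmax _ hins
    rw [Finset.card_insert_of_notMem hxS] at this
    omega
  choose r hr using hcov
  have hpos : 0 < S.card := Finset.card_pos.2 ⟨_, (r (Classical.arbitrary 𝒳)).2⟩
  refine ⟨S.card, hpos, fun x => S.equivFin (r x), fun i y => f (S.equivFin.symm i) y, ?_, ?_⟩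
  · simp only [Equiv.symm_apply_apply]
    have hX1 : ∑ x, ∑ b, μ (x, b) = 1 := by rw [← Fintype.sum_prod_type, hsum]
    have hprod : ∑ z : 𝒳 × 𝒴, (if f (r z.1) z.2 = f z.1 z.2 then 0 else
        (∑ b, μ (z.1, b)) * (∑ a, μ (a, z.2))) ≤ (1 / 2 : ℝ) ^ k := by
      rw [Fintype.sum_prod_type]
      calc _ = ∑ x, (∑ b, μ (x, b)) * dist (r x) x := by
            refine Finset.sum_congr rfl fun x _ => ?_
            simp only [dist, Finset.mul_sum, mul_ite, mul_zero, hwdef]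
        _ ≤ ∑ x, (∑ b, μ (x, b)) * (1 / 2 : ℝ) ^ k :=
            Finset.sum_le_sum fun x _ =>
              mul_le_mul_of_nonneg_left (hr x) (Finset.sum_nonneg fun _ _ => hμ _)
        _ = _ := by rw [← Finset.sum_mul, hX1, one_mul]
    have h := prob_mul_le_mutInf_add_one μ hμ hsum (fun z => f (r z.1) z.2 = f z.1 z.2) k hprod
    have hk0 : (0 : ℝ) < k := by exact_mod_cast hk
    have h2 : I + 1 ≤ ε * k := by
      rw [div_le_iff₀ hε] at hkge
      linarith
    exact le_of_mul_le_mul_right (h.trans h2) hk0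
  · have hcard := card_le_of_separated f d hd1 hd w hw hw1 k hk S hS
    have hlog : Real.logb 2 S.card ≤ 8 * k * d := by
      rw [Real.logb_le_iff_le_rpow (by norm_num) (by exact_mod_cast hpos)]
      have : ((2 : ℝ) ^ (8 * k * d : ℝ)) = ((2 ^ (8 * k * d) : ℕ) : ℝ) := by
        push_cast
        rw [← Real.rpow_natCast]
        push_cast
        rfl
      rw [this]
      exact_mod_cast hcard
    have hL : 1 ≤ Real.logb 2 (1 / ε) := by
      rw [Real.le_logb_iff_rpow_le (by norm_num) (by positivity)]
      simpa using hinv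
    -- The rounding in `k` is absorbed by `1 ≤ (I + 1) / ε`.
    have hk2 : (k : ℝ) ≤ 2 * ((1 / ε) * (1 / ε * I + 1)) := by
      have e1 : (I + 1) / ε = 1 / ε * (I + 1) := by ring
      rw [e1] at hklt
      have e2 : I ≤ 1 / ε * I := le_mul_of_one_le_left hI0 (by linarith)
      have e3 : 1 / ε * (I + 1) ≤ 1 / ε * (1 / ε * I + 1) :=
        mul_le_mul_of_nonneg_left (by linarith) (by linarith)
      have e4 : 1 ≤ 1 / ε * (I + 1) := by nlinarith
      linarith
    have hB : 0 ≤ (1 / ε) * (1 / ε * I + 1) := by positivity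
    calc Real.logb 2 S.card ≤ 8 * k * d := hlog
      _ ≤ 8 * (2 * ((1 / ε) * (1 / ε * I + 1))) * d := by gcongr
      _ = 16 * ((1 / ε) * (1 / ε * I + 1)) * 1 * d := by ring
      _ ≤ 16 * ((1 / ε) * (1 / ε * I + 1)) * Real.logb 2 (1 / ε) * d := by gcongr
      _ = _ := by ring
end
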